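/- Let m, n be positive integers, A ∈ M_{n,m}(𝔽_q((z⁻¹))) and θ ∈ 𝔽_q((z⁻¹))ⁿ. Then ω(A, θ) ≥ 1/ω̂(Aᵀ) and ω̂(A, θ) ≥ 1/ω(Aᵀ). -/

import Mathlib

/-!
Common setup: the field `𝔽_q((z⁻¹))` of formal power series over a finite field `K` of
cardinality `q`, modeled as the field `FF K` of formal Laurent series in `t = z⁻¹`,
together with its non-Archimedean norm, the embedding of the polynomial ring `𝔽_q[z]`,
distances to polynomial (vectors), Diophantine exponents, `Bad` sets, continued fractions
and best approximation sequences.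
-/

open scoped Classical ENNReal NNReal
open Filter

noncomputable section

set_option linter.unusedSectionVars false

namespace FPSDA

variable (K : Type*) [Field K] [Fintype K]

/-- The field `𝔽_q((z⁻¹))` of formal power series in `z⁻¹` over the finite field `K = 𝔽_q`,
modeled as the field of formal Laurent series in the variable `t = z⁻¹`. -/
def FF : Type _ := LaurentSeries K

instance : Field (FF K) := inferInstanceAs (Field (LaurentSeries K))

variable {K}

/-- The identity map, viewing an element of `𝔽_q((z⁻¹))` as a Laurent series in `t = z⁻¹`. -/
def toL (x : FF K) : LaurentSeries K := x

@[simp] lemma toL_zero : toL (0 : FF K) = 0 := rfl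
@[simp] lemma toL_add (x y : FF K) : toL (x + y) = toL x + toL y := rfl
@[simp] lemma toL_neg (x : FF K) : toL (-x) = -toL x := rfl
@[simp] lemma toL_sub (x y : FF K) : toL (x - y) = toL x - toL y := rfl
lemma toL_eq_zero {x : FF K} : toL x = 0 ↔ x = 0 := Iff.rfl

/-- The norm `‖x‖ = q ^ (deg x)` on `𝔽_q((z⁻¹))`, where
`deg x = - (order of x as a Laurent series in z⁻¹)`; `‖0‖ = 0`. -/
def fnorm (x : FF K) : ℝ :=
  if toL x = 0 then 0 else (Fintype.card K : ℝ) ^ (-(toL x).order)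

lemma one_le_q : (1 : ℝ) ≤ (Fintype.card K : ℝ) := by
  exact_mod_cast Fintype.card_pos

lemma fnorm_nonneg (x : FF K) : 0 ≤ fnorm x := by
  unfold fnorm
  split_ifs
  · exact le_refl 0
  · exact zpow_nonneg (by positivity) _

lemma fnorm_eq_zero {x : FF K} : fnorm x = 0 ↔ x = 0 := by
  unfold fnorm
  split_ifs with h
  · exact ⟨fun _ => toL_eq_zero.mp h, fun _ => rfl⟩
  · constructor
    · intro hc
      exact absurd hc (zpow_ne_zero _ (by
        have h0 : (0:ℝ) < (Fintype.card K : ℝ) := by positivity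
        exact ne_of_gt h0))
    · intro hc
      exact absurd (toL_eq_zero.mpr hc) h

lemma fnorm_neg (x : FF K) : fnorm (-x) = fnorm x := by
  unfold fnorm
  rw [toL_neg]
  simp [neg_eq_zero, HahnSeries.order_neg]

lemma fnorm_add_le (x y : FF K) : fnorm (x + y) ≤ max (fnorm x) (fnorm y) := by
  by_cases hxy : x + y = 0
  · rw [fnorm_eq_zero.mpr hxy]
    exact le_max_of_le_left (fnorm_nonneg x)
  by_cases hx : x = 0
  · rw [hx, zero_add]
    exact le_max_right _ _
  by_cases hy : y = 0
  · rw [hy, add_zero]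
    exact le_max_left _ _
  have horder : min (toL x).order (toL y).order ≤ (toL (x + y)).order := by
    rw [toL_add]
    exact HahnSeries.min_order_le_order_add (show toL x + toL y ≠ 0 from hxy)
  have h1 : fnorm (x + y) = (Fintype.card K : ℝ) ^ (-(toL (x+y)).order) := by
    unfold fnorm
    rw [if_neg (show toL (x + y) ≠ 0 from hxy)]
  rcases le_total (toL x).order (toL y).order with h | h
  · have h2 : (toL x).order ≤ (toL (x+y)).order := le_trans (by simp [min_eq_left h]) horder
    refine le_max_of_le_left ?_
    rw [h1]
    unfold fnorm
    rw [if_neg (show toL x ≠ 0 from hx)]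
    exact zpow_le_zpow_right₀ one_le_q (by omega)
  · have h2 : (toL y).order ≤ (toL (x+y)).order := le_trans (by simp [min_eq_right h]) horder
    refine le_max_of_le_right ?_
    rw [h1]
    unfold fnorm
    rw [if_neg (show toL y ≠ 0 from hy)]
    exact zpow_le_zpow_right₀ one_le_q (by omega)

/-- The (ultra)metric `dist x y = ‖x - y‖` on `𝔽_q((z⁻¹))`. -/
instance : MetricSpace (FF K) where
  dist x y := fnorm (x - y)
  dist_self x := by
    show fnorm (x - x) = 0
    rw [sub_self]
    exact fnorm_eq_zero.mpr rfl
  dist_comm x y := by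
    show fnorm (x - y) = fnorm (y - x)
    have h : x - y = -(y - x) := by ring
    rw [h, fnorm_neg]
  dist_triangle x y z := by
    show fnorm (x - z) ≤ fnorm (x - y) + fnorm (y - z)
    have h : x - z = (x - y) + (y - z) := by ring
    calc fnorm (x - z) ≤ max (fnorm (x - y)) (fnorm (y - z)) := by
          rw [h]; exact fnorm_add_le _ _
      _ ≤ fnorm (x - y) + fnorm (y - z) :=
        max_le (le_add_of_nonneg_right (fnorm_nonneg _)) (le_add_of_nonneg_left (fnorm_nonneg _))
  eq_of_dist_eq_zero := by
    intro x y h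
    have h' : x - y = 0 := fnorm_eq_zero.mp h
    exact sub_eq_zero.mp h'

instance : MeasurableSpace (FF K) := borel _
instance : BorelSpace (FF K) := ⟨rfl⟩

/-- The canonical embedding of the polynomial ring `𝔽_q[z]` into `𝔽_q((z⁻¹))`:
the variable `z` is sent to `t⁻¹ = single (-1) 1`. -/
def polyF (P : Polynomial K) : FF K :=
  Polynomial.aeval (HahnSeries.single (-1 : ℤ) (1 : K)) P

/-- Supremum norm of a vector with entries in `𝔽_q((z⁻¹))`. -/
def vnorm {ι : Type*} [Fintype ι] (v : ι → FF K) : ℝ := ⨆ i, fnorm (v i)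

/-- `⟨v⟩`, the distance from the vector `v` to the nearest polynomial vector. -/
def vdist {ι : Type*} [Fintype ι] (v : ι → FF K) : ℝ :=
  ⨅ y : ι → Polynomial K, vnorm (fun i => v i - polyF (y i))

/-- `⟨x⟩`, the distance from the scalar `x` to the nearest polynomial. -/
def sdist (x : FF K) : ℝ := ⨅ y : Polynomial K, fnorm (x - polyF y)

/-- The fractional part `{x} = Σ_{i ≥ 1} a_i z^{-i}` of `x = Σ_i a_i z^{-i}`. -/
def fracPart (x : FF K) : FF K :=
  (⟨fun i => if 1 ≤ i then (toL x).coeff i else 0, (toL x).isPWO_support'.mono (by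
      intro i hi
      by_cases h : (1:ℤ) ≤ i
      · simpa [Function.mem_support, h] using hi
      · simp [Function.mem_support, h] at hi)⟩ : LaurentSeries K)

/-- The integer part `[x] = Σ_{i ≤ 0} a_i z^{-i}` of `x = Σ_i a_i z^{-i}`, as a polynomial
in `z`. -/
def intPoly (x : FF K) : Polynomial K :=
  ∑ i ∈ Finset.range ((-(toL x).order).toNat + 1),
    Polynomial.monomial i ((toL x).coeff (-(i : ℤ)))

/-- `x ∈ 𝔽_q((z⁻¹))` is irrational if it is not in `𝔽_q(z)`, i.e. is not a ratio of two
polynomials in `z`. -/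
def FIrrational (x : FF K) : Prop :=
  ∀ P Q : Polynomial K, Q ≠ 0 → x * polyF Q ≠ polyF P

section Exponents

variable {m n : ℕ}

/-- The norm `‖x‖ = max_j ‖x_j‖` of a polynomial vector `x`. -/
def pnorm {ι : Type*} [Fintype ι] (x : ι → Polynomial K) : ℝ :=
  vnorm (fun i => (polyF (x i) : FF K))

/-- The system `⟨A x - θ⟩ ≤ H^{-ω}`, `‖x‖ ≤ H` has a polynomial solution `x`. -/
def Solv (A : Matrix (Fin n) (Fin m) (FF K)) (θ : Fin n → FF K) (ω H : ℝ) : Prop :=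
  ∃ x : Fin m → Polynomial K,
    vdist (A.mulVec (fun j => polyF (x j)) - θ) ≤ H ^ (-ω) ∧ pnorm x ≤ H

/-- The system `⟨A x⟩ ≤ H^{-ω}`, `‖x‖ ≤ H` has a nonzero polynomial solution `x`. -/
def SolvHom (A : Matrix (Fin n) (Fin m) (FF K)) (ω H : ℝ) : Prop :=
  ∃ x : Fin m → Polynomial K, x ≠ 0 ∧
    vdist (A.mulVec (fun j => polyF (x j))) ≤ H ^ (-ω) ∧ pnorm x ≤ H

/-- The inhomogeneous exponent `ω(A, θ)`: the supremum (in `[0,∞]`) of all `ω` such that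
for arbitrarily large `H` the system `⟨A x - θ⟩ ≤ H^{-ω}`, `‖x‖ ≤ H` has a polynomial
solution. -/
def omegaInhom (A : Matrix (Fin n) (Fin m) (FF K)) (θ : Fin n → FF K) : ℝ≥0∞ :=
  ⨆ (ω : ℝ) (_ : ∀ H₀ : ℝ, ∃ H : ℝ, H₀ ≤ H ∧ Solv A θ ω H), ENNReal.ofReal ω

/-- The uniform inhomogeneous exponent `ω̂(A, θ)`: as `ω(A, θ)`, but with a solution for
all sufficiently large `H`. -/
def omegaHatInhom (A : Matrix (Fin n) (Fin m) (FF K)) (θ : Fin n → FF K) : ℝ≥0∞ :=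
  ⨆ (ω : ℝ) (_ : ∃ H₀ : ℝ, ∀ H : ℝ, H₀ ≤ H → Solv A θ ω H), ENNReal.ofReal ω

/-- The homogeneous exponent `ω(A)`. -/
def omegaHom (A : Matrix (Fin n) (Fin m) (FF K)) : ℝ≥0∞ :=
  ⨆ (ω : ℝ) (_ : ∀ H₀ : ℝ, ∃ H : ℝ, H₀ ≤ H ∧ SolvHom A ω H), ENNReal.ofReal ω

/-- The uniform homogeneous exponent `ω̂(A)`. -/
def omegaHatHom (A : Matrix (Fin n) (Fin m) (FF K)) : ℝ≥0∞ :=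
  ⨆ (ω : ℝ) (_ : ∃ H₀ : ℝ, ∀ H : ℝ, H₀ ≤ H → SolvHom A ω H), ENNReal.ofReal ω

/-- `A` is non-degenerate: the `𝔽_q[z]`-module `Aᵀ 𝔽_q[z]ⁿ + 𝔽_q[z]^m ⊆ 𝔽_q((z⁻¹))^m` has
rank `m + n` over `𝔽_q[z]`, i.e. its `m + n` natural generators are linearly independent
over `𝔽_q[z]`; equivalently, no nonzero polynomial vector `u` makes `Aᵀ u` a polynomial
vector. -/
def Nondegenerate (A : Matrix (Fin n) (Fin m) (FF K)) : Prop :=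
  ∀ u : Fin n → Polynomial K,
    (∃ v : Fin m → Polynomial K,
      A.transpose.mulVec (fun i => polyF (u i)) = fun j => polyF (v j)) → u = 0

/-- `liminf_{x ∈ 𝔽_q[z]^m, ‖x‖ → ∞} ‖x‖^{m/n} ⟨A x - θ⟩`, computed in `[0, ∞]`. -/
def badLiminf (A : Matrix (Fin n) (Fin m) (FF K)) (θ : Fin n → FF K) : ℝ≥0∞ :=
  Filter.liminf
    (fun x : Fin m → Polynomial K =>
      ENNReal.ofReal ((pnorm x) ^ ((m : ℝ) / (n : ℝ)) *
        vdist (A.mulVec (fun j => polyF (x j)) - θ)))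
    (Filter.comap (fun x : Fin m → Polynomial K => pnorm x) Filter.atTop)

/-- The set `Bad^ε(A)` of `θ` in the unit polydisc `𝕀ⁿ` with
`liminf_{‖x‖ → ∞} ‖x‖^{m/n} ⟨A x - θ⟩ ≥ ε`. -/
def Bad (A : Matrix (Fin n) (Fin m) (FF K)) (ε : ℝ) : Set (Fin n → FF K) :=
  {θ | (∀ i, fnorm (θ i) < 1) ∧ ENNReal.ofReal ε ≤ badLiminf A θ}

/-- The set `Bad(A) = ⋃_{ε > 0} Bad^ε(A)`. -/
def BadAll (A : Matrix (Fin n) (Fin m) (FF K)) : Set (Fin n → FF K) :=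
  ⋃ (ε : ℝ) (_ : 0 < ε), Bad A ε

/-- `M(y) = ⟨Aᵀ y⟩` for a polynomial vector `y`. -/
def Mfun (A : Matrix (Fin n) (Fin m) (FF K)) (y : Fin n → Polynomial K) : ℝ :=
  vdist (A.transpose.mulVec (fun i => polyF (y i)))

/-- `y 1, y 2, …` is a sequence of best approximations related to `Aᵀ`:
`1 = Y_1 < Y_2 < ⋯`, `M_1 > M_2 > ⋯`, and `M(x) ≥ M_k` for every nonzero polynomial
vector `x` with `‖x‖ < Y_{k+1}` (the value `y 0` is irrelevant). -/
def IsBestApproxSeq (A : Matrix (Fin n) (Fin m) (FF K))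
    (y : ℕ → Fin n → Polynomial K) : Prop :=
  pnorm (y 1) = 1 ∧
  (∀ k, 1 ≤ k → pnorm (y k) < pnorm (y (k + 1))) ∧
  (∀ k, 1 ≤ k → Mfun A (y (k + 1)) < Mfun A (y k)) ∧
  (∀ k, 1 ≤ k → ∀ x : Fin n → Polynomial K, x ≠ 0 → pnorm x < pnorm (y (k + 1)) →
    Mfun A (y k) ≤ Mfun A x)

end Exponents

section Scalar

/-- The system `⟨ξ x - θ⟩ ≤ H^{-ω}`, `‖x‖ ≤ H` has a polynomial solution `x`. -/
def sSolv (ξ θ : FF K) (ω H : ℝ) : Prop :=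
  ∃ x : Polynomial K, sdist (ξ * polyF x - θ) ≤ H ^ (-ω) ∧ fnorm (polyF x) ≤ H

/-- The scalar inhomogeneous exponent `ω((ξ), θ)`. -/
def somegaInhom (ξ θ : FF K) : ℝ≥0∞ :=
  ⨆ (ω : ℝ) (_ : ∀ H₀ : ℝ, ∃ H : ℝ, H₀ ≤ H ∧ sSolv ξ θ ω H), ENNReal.ofReal ω

/-- The scalar uniform inhomogeneous exponent `ω̂((ξ), θ)`. -/
def somegaHatInhom (ξ θ : FF K) : ℝ≥0∞ :=
  ⨆ (ω : ℝ) (_ : ∃ H₀ : ℝ, ∀ H : ℝ, H₀ ≤ H → sSolv ξ θ ω H), ENNReal.ofReal ω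

/-- The scalar homogeneous exponent `ω((ξ))`. -/
def somegaHom (ξ : FF K) : ℝ≥0∞ :=
  ⨆ (ω : ℝ) (_ : ∀ H₀ : ℝ, ∃ H : ℝ, H₀ ≤ H ∧ ∃ x : Polynomial K, x ≠ 0 ∧
      sdist (ξ * polyF x) ≤ H ^ (-ω) ∧ fnorm (polyF x) ≤ H), ENNReal.ofReal ω

/-- `liminf_{x ∈ 𝔽_q[z], ‖x‖ → ∞} ‖x‖ ⟨α x - θ⟩`, computed in `[0, ∞]`. -/
def sBadLiminf (α θ : FF K) : ℝ≥0∞ :=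
  Filter.liminf
    (fun x : Polynomial K => ENNReal.ofReal (fnorm (polyF x) * sdist (α * polyF x - θ)))
    (Filter.comap (fun x : Polynomial K => fnorm (polyF x)) Filter.atTop)

/-- The set `Bad^ε(α)` of `θ ∈ 𝕀` with `liminf_{‖x‖ → ∞} ‖x‖ ⟨α x - θ⟩ ≥ ε`. -/
def sBad (α : FF K) (ε : ℝ) : Set (FF K) :=
  {θ | fnorm θ < 1 ∧ ENNReal.ofReal ε ≤ sBadLiminf α θ}

end Scalar

section CF

/-- The Gauss map `T x = 1/x - [1/x]` on `𝔽_q((z⁻¹))`. -/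
def gaussMap (x : FF K) : FF K := fracPart x⁻¹

/-- `pquot α k` is the `(k+1)`-st partial quotient `A_{k+1} = [1 / T^k α]` of the
continued fraction expansion of `α`. -/
def pquot (α : FF K) (k : ℕ) : Polynomial K := intPoly ((gaussMap^[k] α)⁻¹)

/-- `cfQ α k` is the denominator `Q_k` of the `k`-th convergent of the continued fraction
expansion of `α`: `Q_0 = 1`, `Q_1 = A_1`, `Q_{k+2} = A_{k+2} Q_{k+1} + Q_k`. -/
def cfQ (α : FF K) : ℕ → Polynomial K
  | 0 => 1
  | 1 => pquot α 0
  | (k + 2) => pquot α (k + 1) * cfQ α (k + 1) + cfQ α k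

/-- `α` is singular on average: for every `c > 0` the proportion of `l ∈ {1, …, N}` for
which `‖{Q α}‖ ≤ c 2^{-l}` has a solution `Q ∈ 𝔽_q[z]` with `0 < ‖Q‖ ≤ 2^l` tends to `1`
as `N → ∞`. -/
def SingularOnAverage (α : FF K) : Prop :=
  ∀ c : ℝ, 0 < c →
    Filter.Tendsto
      (fun N : ℕ =>
        (((Finset.Icc 1 N).filter (fun l : ℕ =>
            ∃ Q : Polynomial K, Q ≠ 0 ∧ fnorm (polyF Q) ≤ 2 ^ l ∧
              fnorm (fracPart (polyF Q * α)) ≤ c / 2 ^ l)).card : ℝ) / (N : ℝ))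
      Filter.atTop (nhds 1)

end CF

end FPSDA

open FPSDA MeasureTheory

namespace FPSDA

variable {K : Type*} [Field K] [Fintype K]

/-- polynomial with given coefficients -/
def mkP {N : ℕ} (c : Fin N → K) : Polynomial K :=
  ∑ l : Fin N, Polynomial.monomial (l : ℕ) (c l)

lemma polyF_monomial (l : ℕ) (c : K) :
    polyF (Polynomial.monomial l c) = (HahnSeries.single (-(l:ℤ)) c : LaurentSeries K) := by
  have h : (Polynomial.aeval (HahnSeries.single (-1 : ℤ) (1 : K) : HahnSeries ℤ K)
      (Polynomial.monomial l c) : HahnSeries ℤ K) = HahnSeries.single (-(l:ℤ)) c := by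
    rw [Polynomial.aeval_monomial, HahnSeries.single_pow]
    have h1 : algebraMap K (HahnSeries ℤ K) c = HahnSeries.single 0 c :=
      HahnSeries.ofPowerSeries_C c
    rw [h1, HahnSeries.single_mul_single]
    simp
  exact h

lemma polyF_sum {ι : Type*} (s : Finset ι) (f : ι → Polynomial K) :
    toL (polyF (∑ i ∈ s, f i)) = ∑ i ∈ s, toL (polyF (f i)) := by
  unfold polyF toL
  exact map_sum (Polynomial.aeval (HahnSeries.single (-1 : ℤ) (1 : K))) f s

lemma coeff_mul_mkP {N : ℕ} (f : LaurentSeries K) (c : Fin N → K) (k : ℤ) :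
    (f * toL (polyF (mkP c))).coeff k = ∑ l : Fin N, c l * f.coeff (k + l) := by
  unfold mkP
  rw [polyF_sum, Finset.mul_sum, HahnSeries.coeff_sum]
  refine Finset.sum_congr rfl fun l _ => ?_
  have h := HahnSeries.coeff_mul_single_add (x := f) (r := c l) (a := k + l) (b := -(l:ℤ))
  rw [add_neg_cancel_right] at h
  rw [mul_comm (c l), ← h, polyF_monomial]
  rfl

lemma coeff_polyF (P : Polynomial K) (k : ℤ) :
    (toL (polyF P)).coeff k = if k ≤ 0 then P.coeff (-k).toNat else 0 := by
  induction P using Polynomial.induction_on' with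
  | add p q hp hq =>
    have : toL (polyF (p + q)) = toL (polyF p) + toL (polyF q) := by
      unfold polyF toL; exact map_add _ p q
    rw [this, HahnSeries.coeff_add, hp, hq]
    split_ifs <;> simp
  | monomial l c =>
    rw [polyF_monomial]
    change (HahnSeries.single (-(l:ℤ)) c : LaurentSeries K).coeff k = _
    rw [HahnSeries.coeff_single, Polynomial.coeff_monomial]
    split_ifs <;> first | rfl | omega

lemma fnorm_le_of_coeff (x : FF K) (N : ℤ) (h : ∀ k < N, (toL x).coeff k = 0) :
    fnorm x ≤ (Fintype.card K : ℝ) ^ (-N) := by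
  unfold fnorm
  split_ifs with h0
  · positivity
  · apply zpow_le_zpow_right₀ one_le_q
    by_contra hc
    exact HahnSeries.coeff_order_eq_zero.not.mpr h0 (h _ (by omega))

lemma coeff_intPoly (x : FF K) (k : ℕ) : (intPoly x).coeff k = (toL x).coeff (-(k:ℤ)) := by
  unfold intPoly
  rw [Polynomial.finsetSum_coeff]
  simp only [Polynomial.coeff_monomial, Finset.sum_ite_eq', Finset.mem_range]
  split_ifs with h
  · rfl
  · exact (HahnSeries.coeff_eq_zero_of_lt_order (by omega)).symm

lemma vdist_le {ι : Type*} [Fintype ι] [Nonempty ι] (v : ι → FF K) (L : ℕ)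
    (h : ∀ i, ∀ k : Fin L, (toL (v i)).coeff (1 + k) = 0) :
    vdist v ≤ (Fintype.card K : ℝ) ^ (-((L:ℤ) + 1)) := by
  unfold vdist
  refine (ciInf_le ⟨0, ?_⟩ (fun i => intPoly (v i))).trans ?_
  · rintro _ ⟨y, rfl⟩
    exact Real.iSup_nonneg fun i => fnorm_nonneg _
  · refine ciSup_le fun i => fnorm_le_of_coeff _ _ fun k hk => ?_
    rw [toL_sub, HahnSeries.coeff_sub, coeff_polyF]
    split_ifs with h0
    · rw [coeff_intPoly, sub_eq_zero]; congr 1; omega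
    · have := h i ⟨(k-1).toNat, by omega⟩
      rw [sub_zero, ← this]; congr 1; simp; omega

lemma pnorm_mkP_le {ι : Type*} [Fintype ι] [Nonempty ι] {N : ℕ} (c : ι → Fin N → K) :
    pnorm (fun i => mkP (c i)) ≤ (Fintype.card K : ℝ) ^ N := by
  unfold pnorm vnorm
  refine ciSup_le fun i => ?_
  have := fnorm_le_of_coeff (polyF (mkP (c i))) (-(N:ℤ)) fun k hk => by
    rw [coeff_polyF]
    split_ifs with h0
    · unfold mkP
      rw [Polynomial.finsetSum_coeff]
      refine Finset.sum_eq_zero fun l _ => ?_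
      rw [Polynomial.coeff_monomial, if_neg]
      have := l.2
      omega
    · rfl
  simpa using this

lemma mkP_ne_zero {ι : Type*} {N : ℕ} (c : ι → Fin N → K) (hc : ∃ i l, c i l ≠ 0) :
    (fun i => mkP (c i)) ≠ 0 := by
  obtain ⟨i, l, h⟩ := hc
  intro h0
  have h1 : mkP (c i) = 0 := congrFun h0 i
  apply h
  have h2 : (mkP (c i)).coeff l = 0 := by rw [h1]; simp
  unfold mkP at h2
  rw [Polynomial.finsetSum_coeff] at h2
  simpa [Polynomial.coeff_monomial, Fin.val_inj] using h2

lemma alternative {R C : Type*} [Fintype R] [Fintype C] (M : Matrix R C K) (b : R → K) :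
    (∃ c, M.mulVec c = b) ∨ (∃ d : R → K, d ≠ 0 ∧ Matrix.vecMul d M = 0) := by
  by_cases h : ∃ c, M.mulVec c = b
  · exact Or.inl h
  right
  have hlt : LinearMap.range M.mulVecLin < ⊤ := by
    rw [lt_top_iff_ne_top]
    intro ht
    have : b ∈ LinearMap.range M.mulVecLin := by rw [ht]; trivial
    obtain ⟨c, hc⟩ := this
    exact h ⟨c, by simpa using hc⟩
  obtain ⟨f, hf, hle⟩ := Submodule.exists_le_ker_of_lt_top _ hlt
  have hf' : ∀ v, f v = ∑ r, f (Pi.single r 1) * v r := by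
    intro v
    conv_lhs => rw [pi_eq_sum_univ' v]
    simp [map_sum, mul_comm]
  refine ⟨fun r => f (Pi.single r 1), ?_, ?_⟩
  · intro h0
    apply hf
    ext v
    simp [congrFun h0 v]
  · funext c
    have := hle (LinearMap.mem_range_self M.mulVecLin (Pi.single c 1))
    rw [LinearMap.mem_ker, hf'] at this
    simpa [Matrix.vecMul, dotProduct] using this

lemma toL_mulVec {n m : ℕ} (A : Matrix (Fin n) (Fin m) (FF K)) (x : Fin m → FF K) (i : Fin n) :
    toL (A.mulVec x i) = ∑ j, toL (A i j) * toL (x j) := rfl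

lemma transfer {m n : ℕ} (hm : 0 < m) (hn : 0 < n)
    (A : Matrix (Fin n) (Fin m) (FF K)) (θ : Fin n → FF K) (w H : ℝ) (hw : 0 < w) (hH : 1 ≤ H)
    (hS : ¬ Solv A θ w H) : SolvHom A.transpose w⁻¹ (H ^ w) := by
  have : Nonempty (Fin m) := ⟨⟨0, hm⟩⟩
  have : Nonempty (Fin n) := ⟨⟨0, hn⟩⟩
  have hq : (1:ℝ) < Fintype.card K := by exact_mod_cast Fintype.one_lt_card
  obtain ⟨N, hN1, hN2⟩ := exists_nat_pow_near hH hq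
  obtain ⟨L, hL1, hL2⟩ := exists_nat_pow_near (Real.one_le_rpow hH hw.le) hq
  have hH0 : 0 < H := by linarith
  have inv_bd : ∀ (Y : ℝ) (N : ℕ), 0 < Y → Y < (Fintype.card K : ℝ) ^ (N+1) →
      (Fintype.card K : ℝ) ^ (-((N:ℤ) + 1)) ≤ Y⁻¹ := by
    intro Y N hY h
    rw [zpow_neg]
    apply inv_anti₀ hY
    exact_mod_cast h.le
  rcases alternative (Matrix.of fun (r : Fin n × Fin L) (c : Fin m × Fin N) =>
    (toL (A r.1 c.1)).coeff (1 + (r.2 : ℤ) + c.2)) (fun r => (toL (θ r.1)).coeff (1 + r.2))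
    with ⟨c, hc⟩ | ⟨d, hd0, hd⟩
  · exfalso
    apply hS
    refine ⟨fun j => mkP fun l => c (j, l), ?_, (pnorm_mkP_le _).trans hN1⟩
    refine (vdist_le _ L fun i k => ?_).trans ?_
    · have := congrFun hc (i, k)
      simp only [Matrix.mulVec, dotProduct, Matrix.of_apply, Fintype.sum_prod_type] at this
      rw [Pi.sub_apply, toL_sub, HahnSeries.coeff_sub, sub_eq_zero, toL_mulVec,
        HahnSeries.coeff_sum, ← this]
      refine Finset.sum_congr rfl fun j _ => ?_
      rw [coeff_mul_mkP]
      exact Finset.sum_congr rfl fun l _ => mul_comm _ _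
    · rw [Real.rpow_neg hH0.le]
      exact inv_bd _ _ (by positivity) hL2
  · refine ⟨fun i => mkP fun k => d (i, k), mkP_ne_zero _ ?_, ?_, (pnorm_mkP_le _).trans hL1⟩
    · by_contra hcon
      push Not at hcon
      exact hd0 (funext fun r => hcon r.1 r.2)
    refine (vdist_le _ N fun j l => ?_).trans ?_
    · have := congrFun hd (j, l)
      simp only [Matrix.vecMul, dotProduct, Matrix.of_apply, Fintype.sum_prod_type,
        Pi.zero_apply] at this
      rw [toL_mulVec, HahnSeries.coeff_sum, ← this]
      refine Finset.sum_congr rfl fun i _ => ?_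
      rw [coeff_mul_mkP]
      refine Finset.sum_congr rfl fun k _ => ?_
      rw [Matrix.transpose_apply, add_right_comm]
    · rw [← Real.rpow_mul hH0.le, mul_neg, mul_inv_cancel₀ hw.ne', Real.rpow_neg_one]
      exact inv_bd _ _ hH0 hN2

lemma inv_le_of {a b : ℝ≥0∞}
    (h : ∀ w : ℝ, 0 < w → b < ENNReal.ofReal w → ENNReal.ofReal w⁻¹ ≤ a) : a⁻¹ ≤ b := by
  by_contra hc
  push Not at hc
  obtain ⟨r, hr1, hr2⟩ := ENNReal.lt_iff_exists_nnreal_btwn.mp hc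
  have hr0 : 0 < r := by
    have := lt_of_le_of_lt (zero_le (a := b)) hr1
    exact_mod_cast this
  have := h r (by exact_mod_cast hr0) (by simpa using hr1)
  rw [ENNReal.ofReal_inv_of_pos (by exact_mod_cast hr0), ENNReal.ofReal_coe_nnreal] at this
  exact absurd hr2 (not_lt.mpr (ENNReal.inv_le_iff_inv_le.mp this))

end FPSDA

/-- Lower bounds for the inhomogeneous exponents in terms of the homogeneous exponents of
the transposed matrix: `ω(A, θ) ≥ 1 / ω̂(Aᵀ)` and `ω̂(A, θ) ≥ 1 / ω(Aᵀ)`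
(with `1/∞ = 0`). -/
theorem exponent_lower_bounds {K : Type*} [Field K] [Fintype K] {m n : ℕ}
    (hm : 0 < m) (hn : 0 < n)
    (A : Matrix (Fin n) (Fin m) (FF K)) (θ : Fin n → FF K) :
    (omegaHatHom A.transpose)⁻¹ ≤ omegaInhom A θ ∧
      (omegaHom A.transpose)⁻¹ ≤ omegaHatInhom A θ := by
  constructor
  · refine inv_le_of fun w hw hlt => ?_
    have hno : ¬ ∀ H₀ : ℝ, ∃ H : ℝ, H₀ ≤ H ∧ Solv A θ w H := fun h =>
      absurd hlt (not_lt.mpr (le_iSup₂_of_le (f := fun (ω : ℝ)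
        (_ : ∀ H₀ : ℝ, ∃ H : ℝ, H₀ ≤ H ∧ Solv A θ ω H) => ENNReal.ofReal ω) w h le_rfl))
    push Not at hno
    obtain ⟨H₀, hH₀⟩ := hno
    refine le_iSup₂_of_le (f := fun (ω : ℝ)
      (_ : ∃ H₀ : ℝ, ∀ H : ℝ, H₀ ≤ H → SolvHom A.transpose ω H) => ENNReal.ofReal ω) w⁻¹
      ⟨(max 1 H₀) ^ w, fun Y hY => ?_⟩ le_rfl
    have hM : (1:ℝ) ≤ max 1 H₀ := le_max_left _ _
    have hY0 : 0 < Y := lt_of_lt_of_le (by positivity) hY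
    have hle : max 1 H₀ ≤ Y ^ w⁻¹ := by
      have := Real.rpow_le_rpow (by positivity) hY (inv_nonneg.mpr hw.le)
      rwa [← Real.rpow_mul (by positivity), mul_inv_cancel₀ hw.ne', Real.rpow_one] at this
    have := transfer hm hn A θ w (Y ^ w⁻¹) hw (hM.trans hle)
      (hH₀ _ ((le_max_right _ _).trans hle))
    rwa [← Real.rpow_mul hY0.le, inv_mul_cancel₀ hw.ne', Real.rpow_one] at this
  · refine inv_le_of fun w hw hlt => ?_
    have hno : ¬ ∃ H₀ : ℝ, ∀ H : ℝ, H₀ ≤ H → Solv A θ w H := fun h =>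
      absurd hlt (not_lt.mpr (le_iSup₂_of_le (f := fun (ω : ℝ)
        (_ : ∃ H₀ : ℝ, ∀ H : ℝ, H₀ ≤ H → Solv A θ ω H) => ENNReal.ofReal ω) w h le_rfl))
    push Not at hno
    refine le_iSup₂_of_le (f := fun (ω : ℝ)
      (_ : ∀ H₀ : ℝ, ∃ H : ℝ, H₀ ≤ H ∧ SolvHom A.transpose ω H) => ENNReal.ofReal ω) w⁻¹
      (fun Y => ?_) le_rfl
    obtain ⟨H, hH, hS⟩ := hno ((max 1 Y) ^ w⁻¹)
    have hM : (1:ℝ) ≤ max 1 Y := le_max_left _ _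
    have hH1 : 1 ≤ H := (Real.one_le_rpow hM (inv_nonneg.mpr hw.le)).trans hH
    refine ⟨H ^ w, ?_, transfer hm hn A θ w H hw hH1 hS⟩
    have := Real.rpow_le_rpow (by positivity) hH hw.le
    rw [← Real.rpow_mul (by positivity), inv_mul_cancel₀ hw.ne', Real.rpow_one] at this
    exact (le_max_right _ _).trans this
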